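/- Let Ω be a locally compact Hausdorff topological space with Borel σ-algebra B. Let (m_n) be a sequence of finite nonnegative Borel measures on Ω which is uniformly absolutely continuous with respect to a finite Radon measure m and which converges vaguely to m. Let f : Ω → ℝ be a continuous function which has uniformly absolutely continuous (m_n)-integrals on Ω. Then f ∈ L¹(m) and lim_n ∫_Ω f dm_n = ∫_Ω f dm. -/

import Mathlib

open MeasureTheory Filter Topology
open scoped ENNReal

/-!
Uniform absolute continuity of `(mₙ)` turns the tightness of `m` into tightness of the whole
sequence, and uniform absolute continuity of the integrals then gives, for each `ε`, a compactly
supported continuous cut-off `0 ≤ φ ≤ 1` with `∫ (1 - φ) |f| dmₙ < ε` for every `n`. A Fatou lemma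
for vague convergence passes this bound to `m`, which makes `f` integrable. Finally, `∫ f dmₙ` is
within `ε` of `∫ φ f dmₙ`, whose convergence is an instance of vague convergence.
-/

/-- Uniform absolute continuity of the family of measures `μ` with respect to `m`. -/
def UniformlyAbsolutelyContinuous {Ω ι : Type*} [MeasurableSpace Ω]
    (μ : ι → Measure Ω) (m : Measure Ω) : Prop :=
  ∀ ε : ℝ, 0 < ε → ∃ δ : ℝ, 0 < δ ∧ ∀ E : Set Ω, MeasurableSet E →
    m E < ENNReal.ofReal δ → ∀ i, μ i E < ENNReal.ofReal ε

/-- Uniform absolute continuity of the `μ`-integrals of `f`. The integral is Bochner's, so the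
notion is meaningful for functions that are integrable with respect to each `μ i`. -/
def HasUniformlyAbsolutelyContinuousIntegrals {Ω ι E : Type*} [MeasurableSpace Ω]
    [NormedAddCommGroup E] (f : Ω → E) (μ : ι → Measure Ω) : Prop :=
  ∀ ε : ℝ, 0 < ε → ∃ δ : ℝ, 0 < δ ∧ ∀ i, ∀ A : Set Ω, MeasurableSet A →
    μ i A < ENNReal.ofReal δ → ∫ x in A, ‖f x‖ ∂(μ i) < ε

/-- Vague convergence of `μ` to `m` along the filter `l`. Only compactly supported continuous
functions serve as test functions, not all those vanishing at infinity. -/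
def TendstoVaguely {Ω ι : Type*} [TopologicalSpace Ω] [MeasurableSpace Ω]
    (μ : ι → Measure Ω) (l : Filter ι) (m : Measure Ω) : Prop :=
  ∀ g : Ω → ℝ, Continuous g → HasCompactSupport g →
    Tendsto (fun i => ∫ x, g x ∂(μ i)) l (𝓝 (∫ x, g x ∂m))

theorem tendsto_of_forall_exists_dist_le {ι X : Type*} [PseudoMetricSpace X] {l : Filter ι}
    {u : ι → X} {a : X}
    (h : ∀ ε > 0, ∃ (v : ι → X) (b : X),
      Tendsto v l (𝓝 b) ∧ (∀ i, dist (u i) (v i) ≤ ε) ∧ dist a b ≤ ε) :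
    Tendsto u l (𝓝 a) := by
  refine Metric.tendsto_nhds.2 fun ε hε => ?_
  obtain ⟨v, b, hv, huv, hab⟩ := h (ε / 3) (by positivity)
  filter_upwards [Metric.tendsto_nhds.1 hv (ε / 3) (by positivity)] with i hi
  calc dist (u i) a ≤ dist (u i) (v i) + dist (v i) b + dist b a := dist_triangle4 _ _ _ _
    _ < ε := by linarith [huv i, dist_comm a b]

section Measure

variable {Ω : Type*} [TopologicalSpace Ω] [MeasurableSpace Ω] {m : Measure Ω}

theorem setLIntegral_le_of_isSigmaCompact {S : Set Ω} (hS : IsSigmaCompact S) {g : Ω → ℝ≥0∞}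
    {C : ℝ≥0∞} (hC : ∀ K, IsCompact K → ∫⁻ x in K, g x ∂m ≤ C) :
    ∫⁻ x in S, g x ∂m ≤ C := by
  obtain ⟨K, hK, rfl⟩ := hS
  rw [← Set.iUnion_accumulate,
    setLIntegral_iUnion_of_directed g (Set.monotone_accumulate (s := K)).directed_le]
  exact iSup_le fun n => hC _ (isCompact_accumulate hK n)

theorem exists_isSigmaCompact_measure_compl_eq_zero (hm : IsTightMeasureSet {m}) :
    ∃ S : Set Ω, IsSigmaCompact S ∧ m Sᶜ = 0 := by
  rw [isTightMeasureSet_iff_exists_isCompact_measure_compl_le] at hm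
  choose K hK hKm using fun n : ℕ => hm (n : ℝ≥0∞)⁻¹ (by simp)
  refine ⟨⋃ n, K n, isSigmaCompact_iUnion_of_isCompact K hK, ?_⟩
  have hle (n : ℕ) : m (⋃ n, K n)ᶜ ≤ (n : ℝ≥0∞)⁻¹ :=
    (measure_mono (Set.compl_subset_compl.2 (Set.subset_iUnion K n))).trans (hKm n m rfl)
  exact le_antisymm (ge_of_tendsto' ENNReal.tendsto_inv_nat_nhds_zero hle) zero_le

theorem lintegral_le_of_isTightMeasureSet (hm : IsTightMeasureSet {m}) {g : Ω → ℝ≥0∞} {C : ℝ≥0∞}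
    (hC : ∀ K, IsCompact K → ∫⁻ x in K, g x ∂m ≤ C) : ∫⁻ x, g x ∂m ≤ C := by
  obtain ⟨S, hS, hSm⟩ := exists_isSigmaCompact_measure_compl_eq_zero hm
  have hS_univ : S =ᵐ[m] Set.univ := eventuallyEq_univ.2 (mem_ae_iff.2 hSm)
  rw [← setLIntegral_univ, ← setLIntegral_congr hS_univ]
  exact setLIntegral_le_of_isSigmaCompact hS hC

end Measure

theorem norm_integral_sub_integral_smul_le {Ω E : Type*} [MeasurableSpace Ω]
    [NormedAddCommGroup E] [NormedSpace ℝ E] {μ : Measure Ω} {f : Ω → E} (hf : Integrable f μ)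
    {φ : Ω → ℝ} (hφm : AEStronglyMeasurable φ μ) (hφ : ∀ x, φ x ∈ Set.Icc 0 1) :
    ‖∫ x, f x ∂μ - ∫ x, φ x • f x ∂μ‖ ≤ ∫ x, (1 - φ x) * ‖f x‖ ∂μ := by
  have hφ_norm (x : Ω) : ‖φ x‖ ≤ 1 := by
    simpa only [Real.norm_of_nonneg (hφ x).1] using (hφ x).2
  have hφf : Integrable (fun x => φ x • f x) μ := hf.bdd_smul 1 hφm (.of_forall hφ_norm)
  rw [← integral_sub hf hφf]
  refine (norm_integral_le_integral_norm _).trans_eq (integral_congr_ae (.of_forall fun x => ?_))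
  calc ‖f x - φ x • f x‖ = ‖(1 - φ x) • f x‖ := by rw [sub_smul, one_smul]
    _ = (1 - φ x) * ‖f x‖ := by
      rw [norm_smul, Real.norm_of_nonneg (sub_nonneg.2 (hφ x).2)]

section LocallyCompact

variable {Ω ι : Type*} [TopologicalSpace Ω] [LocallyCompactSpace Ω] [R1Space Ω]
  [MeasurableSpace Ω] [OpensMeasurableSpace Ω] {m : Measure Ω} {μ : ι → Measure Ω} {l : Filter ι}

theorem exists_cutoff_integral_lt {E : Type*} [NormedAddCommGroup E]
    (hm : IsTightMeasureSet {m}) (huac : UniformlyAbsolutelyContinuous μ m) {f : Ω → E}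
    (hf : ∀ i, Integrable f (μ i)) (hfuac : HasUniformlyAbsolutelyContinuousIntegrals f μ)
    {ε : ℝ} (hε : 0 < ε) :
    ∃ φ : C(Ω, ℝ), HasCompactSupport φ ∧ (∀ x, φ x ∈ Set.Icc 0 1) ∧
      ∀ i, ∫ x, (1 - φ x) * ‖f x‖ ∂(μ i) < ε := by
  obtain ⟨δ, hδ, hfδ⟩ := hfuac ε hε
  obtain ⟨η, hη, hμη⟩ := huac δ hδ
  obtain ⟨r, hr, hrη⟩ := exists_between (ENNReal.ofReal_pos.2 hη)
  obtain ⟨K, hK, hKm⟩ := isTightMeasureSet_iff_exists_isCompact_measure_compl_le.1 hm r hr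
  obtain ⟨φ, hφ_one, hφ_supp, -, hφ⟩ :=
    exists_continuousMap_one_of_isCompact_subset_isOpen hK.closure isOpen_univ (Set.subset_univ _)
  refine ⟨φ, hφ_supp, hφ, fun i => ?_⟩
  have hA : MeasurableSet (closure K)ᶜ := isClosed_closure.measurableSet.compl
  have hA_small : m (closure K)ᶜ < ENNReal.ofReal η :=
    (measure_mono (Set.compl_subset_compl.2 subset_closure)).trans_lt
      ((hKm m rfl).trans_lt hrη)
  calc ∫ x, (1 - φ x) * ‖f x‖ ∂(μ i)
      = ∫ x in (closure K)ᶜ, (1 - φ x) * ‖f x‖ ∂(μ i) := by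
        refine (setIntegral_eq_integral_of_forall_compl_eq_zero fun x hx => ?_).symm
        rw [hφ_one (not_not.1 hx), Pi.one_apply, sub_self, zero_mul]
    _ ≤ ∫ x in (closure K)ᶜ, ‖f x‖ ∂(μ i) :=
        integral_mono_of_nonneg
          (.of_forall fun x => mul_nonneg (sub_nonneg.2 (hφ x).2) (norm_nonneg _))
          (hf i).norm.integrableOn
          (.of_forall fun x => mul_le_of_le_one_left (norm_nonneg _) (sub_le_self 1 (hφ x).1))
    _ < ε := hfδ i _ hA (hμη _ hA hA_small i)

variable [l.NeBot] [IsFiniteMeasureOnCompacts m] [∀ i, IsFiniteMeasureOnCompacts (μ i)]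

theorem lintegral_le_liminf_of_tendstoVaguely (hm : IsTightMeasureSet {m})
    (hμ : TendstoVaguely μ l m) {g : Ω → ℝ} (hg : Continuous g) (hg_nonneg : 0 ≤ g) :
    ∫⁻ x, ENNReal.ofReal (g x) ∂m ≤ liminf (fun i => ∫⁻ x, ENNReal.ofReal (g x) ∂(μ i)) l := by
  refine lintegral_le_of_isTightMeasureSet hm fun K hK => ?_
  obtain ⟨ψ, hψ_one, hψ_supp, -, hψ⟩ :=
    exists_continuousMap_one_of_isCompact_subset_isOpen hK isOpen_univ (Set.subset_univ _)
  have hψg : Continuous fun x => ψ x * g x := ψ.continuous.mul hg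
  have hψg_supp : HasCompactSupport fun x => ψ x * g x :=
    HasCompactSupport.mul_right (f := ψ) hψ_supp
  have hψg_nonneg (x : Ω) : 0 ≤ ψ x * g x := mul_nonneg (hψ x).1 (hg_nonneg x)
  have ofReal_integral (ν : Measure Ω) [IsFiniteMeasureOnCompacts ν] :
      ENNReal.ofReal (∫ x, ψ x * g x ∂ν) = ∫⁻ x, ENNReal.ofReal (ψ x * g x) ∂ν :=
    ofReal_integral_eq_lintegral_ofReal (hψg.integrable_of_hasCompactSupport hψg_supp)
      (.of_forall hψg_nonneg)
  have hlim : Tendsto (fun i => ∫⁻ x, ENNReal.ofReal (ψ x * g x) ∂(μ i)) l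
      (𝓝 (∫⁻ x, ENNReal.ofReal (ψ x * g x) ∂m)) := by
    simpa only [ofReal_integral] using ENNReal.tendsto_ofReal (hμ _ hψg hψg_supp)
  calc ∫⁻ x in K, ENNReal.ofReal (g x) ∂m
      ≤ ∫⁻ x in K, ENNReal.ofReal (ψ x * g x) ∂m :=
        setLIntegral_mono hψg.measurable.ennreal_ofReal fun x hx => by
          rw [hψ_one hx, Pi.one_apply, one_mul]
    _ ≤ ∫⁻ x, ENNReal.ofReal (ψ x * g x) ∂m := setLIntegral_le_lintegral _ _
    _ = liminf (fun i => ∫⁻ x, ENNReal.ofReal (ψ x * g x) ∂(μ i)) l := hlim.liminf_eq.symm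
    _ ≤ liminf (fun i => ∫⁻ x, ENNReal.ofReal (g x) ∂(μ i)) l :=
        liminf_le_liminf <| .of_forall fun i => lintegral_mono fun x =>
          ENNReal.ofReal_le_ofReal (mul_le_of_le_one_left (hg_nonneg x) (hψ x).2)

theorem integrable_and_integral_le_of_tendstoVaguely (hm : IsTightMeasureSet {m})
    (hμ : TendstoVaguely μ l m) {g : Ω → ℝ} (hg : Continuous g) (hg_nonneg : 0 ≤ g)
    (hg_int : ∀ i, Integrable g (μ i)) {C : ℝ} (hC : ∀ i, ∫ x, g x ∂(μ i) ≤ C) :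
    Integrable g m ∧ ∫ x, g x ∂m ≤ C := by
  have hC_nonneg : 0 ≤ C := by
    obtain ⟨i⟩ := l.nonempty_of_neBot
    exact (integral_nonneg hg_nonneg).trans (hC i)
  have hlintegral : ∫⁻ x, ENNReal.ofReal (g x) ∂m ≤ ENNReal.ofReal C := by
    refine (lintegral_le_liminf_of_tendstoVaguely hm hμ hg hg_nonneg).trans
      (liminf_le_of_le (by isBoundedDefault) fun b hb => ?_)
    obtain ⟨i, hi⟩ := hb.exists
    rw [← ofReal_integral_eq_lintegral_ofReal (hg_int i) (.of_forall hg_nonneg)] at hi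
    exact hi.trans (ENNReal.ofReal_le_ofReal (hC i))
  constructor
  · exact (lintegral_ofReal_ne_top_iff_integrable hg.measurable.aestronglyMeasurable
      (.of_forall hg_nonneg)).1 (ne_top_of_le_ne_top ENNReal.ofReal_ne_top hlintegral)
  · rw [integral_eq_lintegral_of_nonneg_ae (.of_forall hg_nonneg)
      hg.measurable.aestronglyMeasurable]
    exact ENNReal.toReal_le_of_le_ofReal hC_nonneg hlintegral

theorem exists_cutoff_integral_le_of_tendstoVaguely (hm : IsTightMeasureSet {m})
    (huac : UniformlyAbsolutelyContinuous μ m) (hμ : TendstoVaguely μ l m)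
    {E : Type*} [NormedAddCommGroup E] {f : Ω → E} (hf : Continuous f)
    (hf_int : ∀ i, Integrable f (μ i)) (hfuac : HasUniformlyAbsolutelyContinuousIntegrals f μ)
    {ε : ℝ} (hε : 0 < ε) :
    ∃ φ : C(Ω, ℝ), HasCompactSupport φ ∧ (∀ x, φ x ∈ Set.Icc 0 1) ∧
      (∀ i, ∫ x, (1 - φ x) * ‖f x‖ ∂(μ i) ≤ ε) ∧
      Integrable (fun x => (1 - φ x) * ‖f x‖) m ∧ ∫ x, (1 - φ x) * ‖f x‖ ∂m ≤ ε := by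
  obtain ⟨φ, hφ_supp, hφ, hφ_lt⟩ := exists_cutoff_integral_lt hm huac hf_int hfuac hε
  have hone_sub (x : Ω) : 0 ≤ 1 - φ x := sub_nonneg.2 (hφ x).2
  have hone_sub_norm (x : Ω) : ‖1 - φ x‖ ≤ 1 := by
    simpa only [Real.norm_of_nonneg (hone_sub x)] using sub_le_self 1 (hφ x).1
  have hone_sub_cont : Continuous fun x => 1 - φ x := continuous_const.sub φ.continuous
  refine ⟨φ, hφ_supp, hφ, fun i => (hφ_lt i).le,
    integrable_and_integral_le_of_tendstoVaguely hm hμ (hone_sub_cont.mul hf.norm)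
      (fun x => mul_nonneg (hone_sub x) (norm_nonneg _)) (fun i => ?_) fun i => (hφ_lt i).le⟩
  exact (hf_int i).norm.bdd_mul hone_sub_cont.measurable.aestronglyMeasurable
    (.of_forall hone_sub_norm)

theorem integrable_and_tendsto_integral_general (hm : IsTightMeasureSet {m})
    (huac : UniformlyAbsolutelyContinuous μ m) (hμ : TendstoVaguely μ l m)
    {f : Ω → ℝ} (hf : Continuous f) (hf_int : ∀ i, Integrable f (μ i))
    (hfuac : HasUniformlyAbsolutelyContinuousIntegrals f μ) :
    Integrable f m ∧ Tendsto (fun i => ∫ x, f x ∂(μ i)) l (𝓝 (∫ x, f x ∂m)) := by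
  have cutoff {ε : ℝ} (hε : 0 < ε) :=
    exists_cutoff_integral_le_of_tendstoVaguely hm huac hμ hf hf_int hfuac hε
  have hfm : Integrable f m := by
    obtain ⟨φ, hφ_supp, -, -, htail_int, -⟩ := cutoff one_pos
    have hφf : Integrable (fun x => φ x * ‖f x‖) m :=
      (φ.continuous.mul hf.norm).integrable_of_hasCompactSupport hφ_supp.mul_right
    refine (integrable_norm_iff hf.measurable.aestronglyMeasurable).1
      ((hφf.add htail_int).congr (.of_forall fun x => ?_))
    simp only [Pi.add_apply]
    ring
  refine ⟨hfm, tendsto_of_forall_exists_dist_le fun ε hε => ?_⟩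
  obtain ⟨φ, hφ_supp, hφ, hφμ, -, hφm⟩ := cutoff hε
  have hdist {ν : Measure Ω} (hfν : Integrable f ν) :
      dist (∫ x, f x ∂ν) (∫ x, φ x * f x ∂ν) ≤ ∫ x, (1 - φ x) * ‖f x‖ ∂ν := by
    simpa only [dist_eq_norm, smul_eq_mul] using
      norm_integral_sub_integral_smul_le hfν φ.continuous.measurable.aestronglyMeasurable hφ
  exact ⟨_, _, hμ _ (φ.continuous.mul hf) hφ_supp.mul_right,
    fun i => (hdist (hf_int i)).trans (hφμ i), (hdist hfm).trans hφm⟩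

end LocallyCompact

/-- If `(mₙ)` is uniformly absolutely continuous with respect to a finite Radon measure
`m` and vaguely convergent to `m`, and `f` is a continuous function with uniformly
absolutely continuous `(mₙ)`-integrals, then `f ∈ L¹(m)` and `∫ f dmₙ → ∫ f dm`. -/
theorem integrable_and_tendsto_integral
    {Ω : Type*} [TopologicalSpace Ω] [LocallyCompactSpace Ω] [T2Space Ω]
    [MeasurableSpace Ω] [BorelSpace Ω]
    (m : Measure Ω) (mseq : ℕ → Measure Ω)
    [IsFiniteMeasure m] (hfin : ∀ n, IsFiniteMeasure (mseq n))
    (hRadon : m.InnerRegular)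
    (huac : ∀ ε : ℝ, 0 < ε → ∃ δ : ℝ, 0 < δ ∧ ∀ E : Set Ω, MeasurableSet E →
      m E < ENNReal.ofReal δ → ∀ n, mseq n E < ENNReal.ofReal ε)
    (hvague : ∀ g : Ω → ℝ, Continuous g → Tendsto g (cocompact Ω) (𝓝 0) →
      Tendsto (fun n => ∫ x, g x ∂(mseq n)) atTop (𝓝 (∫ x, g x ∂m)))
    (f : Ω → ℝ) (hf : Continuous f)
    (hfint : ∀ n, Integrable f (mseq n))
    (hfuac : ∀ ε : ℝ, 0 < ε → ∃ δ : ℝ, 0 < δ ∧ ∀ n, ∀ A : Set Ω, MeasurableSet A →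
      mseq n A < ENNReal.ofReal δ → ∫ x in A, |f x| ∂(mseq n) < ε) :
    Integrable f m ∧
      Tendsto (fun n => ∫ x, f x ∂(mseq n)) atTop (𝓝 (∫ x, f x ∂m)) :=
  integrable_and_tendsto_integral_general isTightMeasureSet_singleton_of_innerRegular huac
    (fun g hg hg_supp => hvague g hg hg_supp.is_zero_at_infty) hf hfint hfuac
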